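/- Let X be a separable complex operator space, let n, k ∈ ℕ, let [f_pq] be a k×k matrix of Lipschitz functions X → ℂ vanishing at 0, and let ε > 0. Then there exists a k×k matrix [g_pq] of Lipschitz functions X → ℂ vanishing at 0 such that: (1) the map G : X → M_k(ℂ), G(x) = [g_pq(x)], is Gateaux ℝ-differentiable at every point of X; (2) ‖[g_pq]‖_{Lip,n,k} ≤ ‖[f_pq]‖_{Lip,n,k}; and (3) sup over all [x_ij] ∈ M_n(X) of ‖[f_pq(x_ij) − g_pq(x_ij)]‖_{M_{nk}(ℂ)} ≤ ε. -/

import Mathlib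

/-!
The map `F = [f_pq] : X → M_k(ℂ)` is mollified along countably many directions. Choose vectors
`v_m` with dense real span and `∑ ‖v_m‖` tiny, let `avg v h x = ∫₀¹ h (x + t v) dt`, and let
`S = smooth v F` be the pointwise limit of `avg v_m (⋯ (avg v_0 F))`; the limit exists because each
averaging moves a `K`-Lipschitz function by at most `K ‖v_m‖`. The answer is `g = S - S 0`.

* Averages only combine translates of `F`, and translating all entries `x_ij` and `y_ij` by the
  same vector does not change `[x_ij - y_ij]`. Hence every bound
  `‖[f_pq (x_ij)] - [f_pq (y_ij)]‖ ≤ L ‖[x_ij - y_ij]‖` passes to `S` (`smooth_convex`), which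
  gives (2), while (3) follows from `‖F - S‖ ≤ K ∑ ‖v_m‖`.
* `avg v h` has the Lipschitz directional derivative `h (x + v) - h x` along `v`, with remainder
  `O(r²)` uniformly in `x` (`avg_quadDeriv`). Such an expansion is stable under further averaging
  and under limits, applied to the function and the derivative alike, so `S` has Lipschitz
  derivatives along every `v_m` (`smooth_quadDeriv`).
* Uniform differentiability with a uniformly continuous derivative is stable under sums and
  multiples of directions, hence holds on the span of the `v_m`, with derivative linear in the
  direction. Since `S` is Lipschitz, the derivative extends by density to all directions
  (`gateaux_of_dense`).
-/


noncomputable section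

open Filter Topology

namespace OSpaper

/-- The amplification of a square array of bounded operators on a Hilbert space `H` to a
bounded operator on the ℓ²-direct sum of copies of `H`. -/
def amp {𝕜 : Type*} [RCLike 𝕜] {ι : Type*} [Fintype ι] {H : Type*}
    [NormedAddCommGroup H] [InnerProductSpace 𝕜 H] (x : ι → ι → H →L[𝕜] H) :
    (PiLp 2 fun _ : ι => H) →L[𝕜] PiLp 2 fun _ : ι => H :=
  ((PiLp.continuousLinearEquiv 2 𝕜 fun _ : ι => H).symm.toContinuousLinearMap) ∘L
    (ContinuousLinearMap.pi fun i => ∑ j, (x i j).comp (ContinuousLinearMap.proj j)) ∘L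
    ((PiLp.continuousLinearEquiv 2 𝕜 fun _ : ι => H).toContinuousLinearMap)

/-- The norm of an element of `M_ι(B(H))`, i.e. the operator norm of its amplification. -/
def matNorm {𝕜 : Type*} [RCLike 𝕜] {ι : Type*} [Fintype ι] {H : Type*}
    [NormedAddCommGroup H] [InnerProductSpace 𝕜 H] (x : ι → ι → H →L[𝕜] H) : ℝ :=
  ‖amp x‖

/-- The norm of a scalar matrix `M_ι(𝕜)`, viewed as an operator on `ℓ²(ι)`. -/
def cNorm {𝕜 : Type*} [RCLike 𝕜] {ι : Type*} [Fintype ι] (a : ι → ι → 𝕜) : ℝ :=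
  matNorm fun i j => a i j • (1 : 𝕜 →L[𝕜] 𝕜)


variable {H : Type*} [NormedAddCommGroup H] [InnerProductSpace ℂ H] [CompleteSpace H]

/-- `‖[f_pq]‖_{Lip,n,k}` for a matrix of functions on an operator space `X`. -/
def lipMatNorm (X : Submodule ℂ (H →L[ℂ] H)) (n k : ℕ)
    (F : Fin k → Fin k → (X → ℂ)) : ℝ :=
  sInf {L : ℝ | 0 ≤ L ∧ ∀ x y : Fin n → Fin n → X,
    cNorm (fun a b : Fin n × Fin k => F a.2 b.2 (x a.1 b.1) - F a.2 b.2 (y a.1 b.1)) ≤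
      L * matNorm fun i j => (x i j : H →L[ℂ] H) - (y i j : H →L[ℂ] H)}

/-- The scalar matrix `[g_pq x]`, viewed as an operator on `ℓ²(Fin k)`. -/
def matVal {X : Submodule ℂ (H →L[ℂ] H)} {k : ℕ} (g : Fin k → Fin k → (X → ℂ)) (x : X) :
    (PiLp 2 fun _ : Fin k => ℂ) →L[ℂ] PiLp 2 fun _ : Fin k => ℂ :=
  amp fun p q => g p q x • (1 : ℂ →L[ℂ] ℂ)

/-! ### Averaging along countably many directions -/

section Smoothing

open scoped NNReal

variable {V E : Type*} [NormedAddCommGroup V] [NormedSpace ℝ V]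
  [NormedAddCommGroup E] [NormedSpace ℝ E]

/-- The average of `h` over the segment from `x` to `x + v`, as a function of `x`. -/
def avg (v : V) (h : V → E) (x : V) : E := ∫ t in (0 : ℝ)..1, h (x + t • v)

lemma avg_integrable {F : Type*} [NormedAddCommGroup F] {h : V → F} (hh : Continuous h)
    (x v : V) (a b : ℝ) :
    IntervalIntegrable (fun t : ℝ => h (x + t • v)) MeasureTheory.volume a b :=
  (by fun_prop : Continuous fun t : ℝ => h (x + t • v)).intervalIntegrable _ _

lemma norm_unit_integral_le {φ : ℝ → E} {C : ℝ} (h : ∀ t, ‖φ t‖ ≤ C) :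
    ‖∫ t in (0 : ℝ)..1, φ t‖ ≤ C := by
  simpa using intervalIntegral.norm_integral_le_of_norm_le_const (a := 0) (b := 1)
    (fun t _ => h t)

lemma avg_lipschitz {K : ℝ≥0} {h : V → E} (hh : LipschitzWith K h) (v : V) :
    LipschitzWith K (avg v h) := by
  refine LipschitzWith.of_dist_le_mul fun x y => ?_
  rw [dist_eq_norm, dist_eq_norm, avg, avg, ← intervalIntegral.integral_sub
    (avg_integrable hh.continuous _ _ _ _) (avg_integrable hh.continuous _ _ _ _)]
  refine norm_unit_integral_le fun t => ?_
  simpa using hh.norm_sub_le (x + t • v) (y + t • v)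

lemma norm_avg_sub_le [CompleteSpace E] {K : ℝ≥0} {h : V → E} (hh : LipschitzWith K h) (v x : V) :
    ‖avg v h x - h x‖ ≤ K * ‖v‖ := by
  have e : avg v h x - h x = ∫ t in (0 : ℝ)..1, (h (x + t • v) - h x) := by
    rw [intervalIntegral.integral_sub (avg_integrable hh.continuous _ _ _ _)
      (by simp)]
    simp [avg]
  rw [e]
  have := intervalIntegral.norm_integral_le_of_norm_le_const (a := 0) (b := 1) (C := K * ‖v‖)
    (f := fun t => h (x + t • v) - h x) (fun t ht => ?_)
  · simpa using this
  · rw [Set.uIoc_of_le zero_le_one] at ht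
    refine (hh.norm_sub_le _ _).trans ?_
    rw [add_sub_cancel_left, norm_smul, Real.norm_of_nonneg ht.1.le]
    gcongr
    exact mul_le_of_le_one_left (norm_nonneg _) ht.2

/-- `d` is a directional derivative of `h` along `a`, with a quadratic remainder that is uniform
in the base point. -/
def QuadDeriv (a : V) (C : ℝ) (h d : V → E) : Prop :=
  ∀ (x : V) (r : ℝ), ‖h (x + r • a) - h x - r • d x‖ ≤ C * r ^ 2

lemma QuadDeriv.avg {a : V} {C : ℝ} {h d : V → E} (H : QuadDeriv a C h d)
    (hh : Continuous h) (hd : Continuous d) (v : V) :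
    QuadDeriv a C (avg v h) (avg v d) := by
  intro x r
  have e : OSpaper.avg v h (x + r • a) - OSpaper.avg v h x - r • OSpaper.avg v d x =
      ∫ t in (0 : ℝ)..1, (h (x + t • v + r • a) - h (x + t • v) - r • d (x + t • v)) := by
    rw [intervalIntegral.integral_sub, intervalIntegral.integral_sub,
      intervalIntegral.integral_smul]
    · simp only [OSpaper.avg, add_right_comm]
    all_goals exact Continuous.intervalIntegrable (by fun_prop) _ _
  rw [e]
  exact norm_unit_integral_le fun t => H _ _

/-- Averaging along `v` creates differentiability along `v`: with `φ t = h (x + t v)`, the increment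
of the average is `∫₀ʳ (φ (t + 1) - φ t) dt`, and the integrand is within `2 K ‖v‖ |t|` of its value
at `t = 0`. -/
lemma avg_quadDeriv [CompleteSpace E] {K : ℝ≥0} {h : V → E} (hh : LipschitzWith K h) (v : V) :
    QuadDeriv v (2 * K * ‖v‖) (avg v h) (fun x => h (x + v) - h x) := by
  intro x r
  have hc := hh.continuous
  have I := fun a b => avg_integrable hc x v a b
  have e1 : avg v h (x + r • v) = ∫ t in (0 + r)..(1 + r), h (x + t • v) := by
    rw [← intervalIntegral.integral_comp_add_right (fun t => h (x + t • v)) r]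
    simp only [avg, add_smul, add_assoc, add_comm]
  have e2 : ∫ t in (0 : ℝ)..r, h (x + (t + 1) • v) = ∫ t in (0 + 1 : ℝ)..(r + 1), h (x + t • v) :=
    intervalIntegral.integral_comp_add_right (fun t => h (x + t • v)) 1
  have e : avg v h (x + r • v) - avg v h x - r • (h (x + v) - h x) =
      ∫ t in (0 : ℝ)..r, ((h (x + (t + 1) • v) - h (x + v)) - (h (x + t • v) - h x)) := by
    rw [intervalIntegral.integral_sub, intervalIntegral.integral_sub,
      intervalIntegral.integral_sub, e1, e2]
    · have := intervalIntegral.integral_add_adjacent_intervals (I 0 1) (I 1 (1 + r))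
      have := intervalIntegral.integral_add_adjacent_intervals (I 0 r) (I r (1 + r))
      simp only [avg, zero_add, intervalIntegral.integral_const, sub_zero, smul_sub,
        add_comm r 1] at *
      rw [← eq_sub_iff_add_eq'] at *
      simp only [*]
      abel
    all_goals exact Continuous.intervalIntegrable (by fun_prop) _ _
  rw [e]
  have := intervalIntegral.norm_integral_le_of_norm_le_const (a := 0) (b := r)
    (C := 2 * K * ‖v‖ * |r|)
    (f := fun t => (h (x + (t + 1) • v) - h (x + v)) - (h (x + t • v) - h x)) (fun t ht => ?_)
  · rw [sub_zero, mul_assoc, ← sq, sq_abs] at this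
    exact this
  · have ht' : |t| ≤ |r| := by
      rcases Set.mem_uIoc.1 ht with h | h
      · rw [abs_of_pos h.1, abs_of_pos (h.1.trans_le h.2)]; exact h.2
      · rw [abs_of_nonpos h.2, abs_of_neg (h.1.trans_le h.2)]; linarith
    have b1 := hh.norm_sub_le (x + (t + 1) • v) (x + v)
    have b2 := hh.norm_sub_le (x + t • v) x
    have n1 : x + (t + 1) • v - (x + v) = t • v := by module
    rw [n1, norm_smul, Real.norm_eq_abs] at b1
    rw [add_sub_cancel_left, norm_smul, Real.norm_eq_abs] at b2
    have b3 : (K : ℝ) * (|t| * ‖v‖) ≤ K * (|r| * ‖v‖) := by gcongr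
    refine (norm_sub_le _ _).trans ?_
    linarith

/-- A bound on a linear expression in finitely many values of `h`, if it holds for all simultaneous
translates of the points, is inherited by `avg v h`. -/
lemma avg_convex {ι Z : Type*} [Fintype ι] [NormedAddCommGroup Z] [NormedSpace ℝ Z]
    [CompleteSpace E] [CompleteSpace Z] (Λ : (ι → E) →L[ℝ] Z) {h : V → E} (hh : Continuous h) (v : V) (x : ι → V)
    {C : ℝ} (H : ∀ w, ‖Λ fun i => h (x i + w)‖ ≤ C) (w : V) :
    ‖Λ fun i => avg v h (x i + w)‖ ≤ C := by
  have hI : IntervalIntegrable (fun (t : ℝ) (i : ι) => h (x i + (w + t • v)))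
    MeasureTheory.volume 0 1 := Continuous.intervalIntegrable (by fun_prop) _ _
  have e : (fun i => avg v h (x i + w)) =
      ∫ t in (0 : ℝ)..1, (fun i => h (x i + (w + t • v))) := by
    ext i
    have := (ContinuousLinearMap.proj (R := ℝ) (φ := fun _ : ι => E) i).intervalIntegral_comp_comm
      hI
    simpa [avg, add_assoc] using this
  rw [e, ← Λ.intervalIntegral_comp_comm hI]
  exact norm_unit_integral_le fun t => H _

/-- The average of `h` along `v 0`, …, `v (m - 1)` in turn. -/
def iter (v : ℕ → V) (h : V → E) : ℕ → V → E
  | 0 => h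
  | m + 1 => avg (v m) (iter v h m)

lemma iter_lipschitz {K : ℝ≥0} {h : V → E} (hh : LipschitzWith K h) (v : ℕ → V) (m : ℕ) :
    LipschitzWith K (iter v h m) := by
  induction m with
  | zero => exact hh
  | succ m ih => exact avg_lipschitz ih _

lemma iter_add (v : ℕ → V) (h : V → E) (j m : ℕ) :
    iter v h (m + j) = iter (fun i => v (i + j)) (iter v h j) m := by
  induction m with
  | zero => simp [iter]
  | succ m ih => rw [add_right_comm, iter, iter, ih]

lemma dist_iter_le [CompleteSpace E] {K : ℝ≥0} {h : V → E} (hh : LipschitzWith K h) (v : ℕ → V)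
    (x : V) (m : ℕ) : dist (iter v h m x) (iter v h m.succ x) ≤ K * ‖v m‖ := by
  rw [dist_comm, dist_eq_norm]
  exact norm_avg_sub_le (iter_lipschitz hh v m) _ _

/-- The limit of the successive averages of `h` along the `v m`. It is meaningful for Lipschitz `h`
and summable `‖v m‖` (see `tendsto_smooth`); elsewhere `limUnder` may return a junk value. -/
def smooth (v : ℕ → V) (h : V → E) (x : V) : E := limUnder atTop fun m => iter v h m x

lemma tendsto_smooth [CompleteSpace E] {K : ℝ≥0} {h : V → E} (hh : LipschitzWith K h)
    {v : ℕ → V} (hv : Summable fun m => ‖v m‖) (x : V) :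
    Tendsto (fun m => iter v h m x) atTop (𝓝 (smooth v h x)) :=
  (cauchySeq_of_dist_le_of_summable _ (dist_iter_le hh v x) (hv.mul_left _)).tendsto_limUnder

lemma norm_smooth_sub_le [CompleteSpace E] {K : ℝ≥0} {h : V → E} (hh : LipschitzWith K h)
    {v : ℕ → V} (hv : Summable fun m => ‖v m‖) (x : V) :
    ‖h x - smooth v h x‖ ≤ K * ∑' m, ‖v m‖ := by
  rw [← dist_eq_norm, ← tsum_mul_left]
  exact dist_le_tsum_of_dist_le_of_tendsto₀ _ (dist_iter_le hh v x) (hv.mul_left _)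
    (tendsto_smooth hh hv x)

lemma smooth_lipschitz [CompleteSpace E] {K : ℝ≥0} {h : V → E} (hh : LipschitzWith K h)
    {v : ℕ → V} (hv : Summable fun m => ‖v m‖) : LipschitzWith K (smooth v h) :=
  LipschitzWith.of_dist_le_mul fun x y =>
    le_of_tendsto ((tendsto_smooth hh hv x).dist (tendsto_smooth hh hv y))
      (Eventually.of_forall fun m => (iter_lipschitz hh v m).dist_le_mul x y)

lemma smooth_convex {ι Z : Type*} [Fintype ι] [NormedAddCommGroup Z] [NormedSpace ℝ Z]
    [CompleteSpace E] [CompleteSpace Z] (Λ : (ι → E) →L[ℝ] Z) {K : ℝ≥0} {h : V → E} (hh : LipschitzWith K h)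
    {v : ℕ → V} (hv : Summable fun m => ‖v m‖) (x : ι → V)
    {C : ℝ} (H : ∀ w, ‖Λ fun i => h (x i + w)‖ ≤ C) :
    ‖Λ fun i => smooth v h (x i)‖ ≤ C := by
  have key : ∀ m w, ‖Λ fun i => iter v h m (x i + w)‖ ≤ C := by
    intro m
    induction m with
    | zero => exact H
    | succ m ih => exact avg_convex Λ (iter_lipschitz hh v m).continuous _ x ih
  have t : Tendsto (fun m => ‖Λ fun i => iter v h m (x i)‖) atTop
      (𝓝 ‖Λ fun i => smooth v h (x i)‖) :=
    ((Λ.continuous.tendsto _).comp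
      (tendsto_pi_nhds.2 fun i => tendsto_smooth hh hv (x i))).norm
  exact le_of_tendsto t (Eventually.of_forall fun m => by simpa using key m 0)

lemma QuadDeriv.smooth [CompleteSpace E] {a : V} {C : ℝ} {h d : V → E} (H : QuadDeriv a C h d)
    {K K' : ℝ≥0} (hh : LipschitzWith K h) (hd : LipschitzWith K' d)
    {v : ℕ → V} (hv : Summable fun m => ‖v m‖) :
    QuadDeriv a C (smooth v h) (smooth v d) := by
  have key : ∀ m, QuadDeriv a C (iter v h m) (iter v d m) := by
    intro m
    induction m with
    | zero => exact H
    | succ m ih =>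
      exact ih.avg (iter_lipschitz hh v m).continuous (iter_lipschitz hd v m).continuous _
  intro x r
  exact le_of_tendsto (((tendsto_smooth hh hv (x + r • a)).sub (tendsto_smooth hh hv x)).sub
    ((tendsto_smooth hd hv x).const_smul r)).norm (Eventually.of_forall fun m => key m x r)

/-- `smooth v h` is the smoothing, along the directions after `v j`, of an average along `v j`, so
it inherits a derivative along `v j` from that average. -/
lemma smooth_quadDeriv [CompleteSpace E] {K : ℝ≥0} {h : V → E} (hh : LipschitzWith K h)
    {v : ℕ → V} (hv : Summable fun m => ‖v m‖) (j : ℕ) :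
    ∃ (C : ℝ) (d : V → E) (K' : ℝ≥0), LipschitzWith K' d ∧ QuadDeriv (v j) C (smooth v h) d := by
  have hj := iter_lipschitz hh v j
  have hd : LipschitzWith (K + K) fun x => iter v h j (x + v j) - iter v h j x := by
    refine LipschitzWith.sub ?_ hj
    refine LipschitzWith.of_dist_le_mul fun x y => ?_
    simpa using hj.dist_le_mul (x + v j) (y + v j)
  have hv' : Summable fun m => ‖v (m + (j + 1))‖ :=
    (summable_nat_add_iff (f := fun m => ‖v m‖) (j + 1)).2 hv
  have e : smooth v h = smooth (fun m => v (m + (j + 1))) (iter v h (j + 1)) := by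
    ext x
    refine tendsto_nhds_unique ((tendsto_smooth hh hv x).comp (tendsto_add_atTop_nat (j + 1))) ?_
    refine (tendsto_smooth (iter_lipschitz hh v (j + 1)) hv' x).congr fun m => ?_
    simp [← iter_add]
  rw [e]
  exact ⟨_, _, _, smooth_lipschitz hd hv',
    (avg_quadDeriv hj (v j)).smooth (avg_lipschitz hj _) hd hv'⟩

/-! ### Gateaux differentiability from a dense set of directions -/

/-- `g` has directional derivative `d` along `a`, uniformly in the base point, and `d` is uniformly
continuous. The uniformity makes the notion additive in `a` without a mean value theorem. -/
def UnifDeriv (g : V → E) (a : V) (d : V → E) : Prop :=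
  UniformContinuous d ∧ ∀ ε > 0, ∃ δ > 0, ∀ (x : V) (r : ℝ), |r| < δ →
    ‖g (x + r • a) - g x - r • d x‖ ≤ ε * |r|

lemma QuadDeriv.unifDeriv {g d : V → E} {a : V} {C : ℝ} {K : ℝ≥0} (hd : LipschitzWith K d)
    (H : QuadDeriv a C g d) : UnifDeriv g a d := by
  refine ⟨hd.uniformContinuous, fun ε hε => ⟨ε / (|C| + 1), by positivity, fun x r hr => ?_⟩⟩
  refine (H x r).trans ?_
  rw [lt_div_iff₀ (by positivity)] at hr
  have h0 := abs_nonneg r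
  have h1 := le_abs_self C
  calc C * r ^ 2 = C * |r| ^ 2 := by rw [sq_abs]
    _ ≤ (|C| + 1) * |r| ^ 2 := by gcongr; linarith
    _ = (|r| * (|C| + 1)) * |r| := by ring
    _ ≤ ε * |r| := by gcongr

lemma UnifDeriv.add {g d e : V → E} {a b : V} (ha : UnifDeriv g a d) (hb : UnifDeriv g b e) :
    UnifDeriv g (a + b) (fun x => d x + e x) := by
  refine ⟨ha.1.add hb.1, fun ε hε => ?_⟩
  obtain ⟨δ₁, h₁, H₁⟩ := ha.2 (ε / 3) (by positivity)
  obtain ⟨δ₂, h₂, H₂⟩ := hb.2 (ε / 3) (by positivity)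
  obtain ⟨δ₃, h₃, H₃⟩ := Metric.uniformContinuous_iff.1 hb.1 (ε / 3) (by positivity)
  refine ⟨min (min δ₁ δ₂) (δ₃ / (‖a‖ + 1)), by positivity, fun x r hr => ?_⟩
  simp only [lt_min_iff] at hr
  have b1 := H₁ x r hr.1.1
  have b2 := H₂ (x + r • a) r hr.1.2
  have hlt := hr.2
  rw [lt_div_iff₀ (by positivity)] at hlt
  have b3 : ‖e (x + r • a) - e x‖ ≤ ε / 3 := by
    rw [← dist_eq_norm]
    refine (H₃ ?_).le
    rw [dist_eq_norm, add_sub_cancel_left, norm_smul, Real.norm_eq_abs]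
    nlinarith [abs_nonneg r]
  have b4 : ‖r • (e (x + r • a) - e x)‖ ≤ ε / 3 * |r| := by
    rw [norm_smul, Real.norm_eq_abs, mul_comm]; gcongr
  have eq : g (x + r • (a + b)) - g x - r • (d x + e x) =
      (g (x + r • a) - g x - r • d x) +
      (g (x + r • a + r • b) - g (x + r • a) - r • e (x + r • a)) +
      r • (e (x + r • a) - e x) := by
    rw [smul_add, ← add_assoc]; module
  rw [eq]
  exact (norm_add₃_le.trans (add_le_add (add_le_add b1 b2) b4)).trans (by linarith)

lemma UnifDeriv.smul {g d : V → E} {a : V} (ha : UnifDeriv g a d) (c : ℝ) :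
    UnifDeriv g (c • a) (fun x => c • d x) := by
  refine ⟨ha.1.const_smul c, fun ε hε => ?_⟩
  obtain ⟨δ, h, H⟩ := ha.2 (ε / (|c| + 1)) (by positivity)
  refine ⟨δ / (|c| + 1), by positivity, fun x r hr => ?_⟩
  rw [lt_div_iff₀ (by positivity)] at hr
  have := H x (r * c) (by rw [abs_mul]; nlinarith [abs_nonneg r])
  rw [smul_smul, smul_smul]
  refine this.trans ?_
  rw [abs_mul, div_mul_eq_mul_div, div_le_iff₀ (by positivity)]
  nlinarith [abs_nonneg r, mul_nonneg hε.le (abs_nonneg r)]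

lemma UnifDeriv.tendsto {g d : V → E} {a : V} (ha : UnifDeriv g a d) (x : V) :
    Tendsto (fun t : ℝ => t⁻¹ • (g (x + t • a) - g x)) (𝓝[≠] 0) (𝓝 (d x)) := by
  rw [Metric.tendsto_nhdsWithin_nhds]
  intro ε hε
  obtain ⟨δ, h, H⟩ := ha.2 (ε / 2) (by positivity)
  refine ⟨δ, h, fun t ht htd => ?_⟩
  have ht0 : t ≠ 0 := ht
  have b := H x t (by simpa using htd)
  have eq : t⁻¹ • (g (x + t • a) - g x) - d x = t⁻¹ • (g (x + t • a) - g x - t • d x) := by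
    rw [smul_sub t⁻¹ _ (t • d x), inv_smul_smul₀ ht0]
  rw [dist_eq_norm, eq, norm_smul, norm_inv, Real.norm_eq_abs]
  have hp : 0 < |t| := abs_pos.2 ht0
  rw [inv_mul_lt_iff₀ hp]
  nlinarith

lemma norm_slope_sub_le {K : ℝ≥0} {g : V → E} (hg : LipschitzWith K g) (x a b : V) (t : ℝ) :
    ‖t⁻¹ • (g (x + t • a) - g x) - t⁻¹ • (g (x + t • b) - g x)‖ ≤ K * ‖a - b‖ := by
  rcases eq_or_ne t 0 with rfl | ht
  · simp; positivity
  rw [← smul_sub, sub_sub_sub_cancel_right, norm_smul, norm_inv,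
    inv_mul_le_iff₀ (norm_pos_iff.2 ht)]
  refine (hg.norm_sub_le _ _).trans (le_of_eq ?_)
  rw [add_sub_add_left_eq_sub, ← smul_sub, norm_smul]; ring

/-- A Lipschitz map that is uniformly differentiable along directions with dense span is Gateaux
differentiable everywhere. -/
theorem gateaux_of_dense [CompleteSpace E] {K : ℝ≥0} {g : V → E} (hg : LipschitzWith K g)
    {s : Set V} (hs : Dense (Submodule.span ℝ s : Set V))
    (H : ∀ a ∈ s, ∃ d, UnifDeriv g a d) (x : V) :
    ∃ D : V →L[ℝ] E, ∀ a, Tendsto (fun t : ℝ => t⁻¹ • (g (x + t • a) - g x)) (𝓝[≠] 0)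
      (𝓝 (D a)) := by
  have H' : ∀ a : Submodule.span ℝ s, ∃ d, UnifDeriv g (a : V) d := by
    rintro ⟨a, ha⟩
    induction ha using Submodule.span_induction with
    | mem a ha => exact H a ha
    | zero => exact ⟨fun _ => 0, uniformContinuous_const, fun ε hε => ⟨1, one_pos, fun x r _ => by
        simp; positivity⟩⟩
    | add a b _ _ h1 h2 =>
      obtain ⟨d, hd⟩ := h1
      obtain ⟨e, he⟩ := h2
      exact ⟨_, hd.add he⟩
    | smul c a _ h1 =>
      obtain ⟨d, hd⟩ := h1
      exact ⟨_, hd.smul c⟩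
  choose d hd using H'
  have uniq : ∀ (a : Submodule.span ℝ s) (e : V → E), UnifDeriv g (a : V) e → d a x = e x :=
    fun a e he => tendsto_nhds_unique ((hd a).tendsto x) (he.tendsto x)
  let D₀ : Submodule.span ℝ s →ₗ[ℝ] E :=
    { toFun := fun a => d a x
      map_add' := fun a b => uniq (a + b) _ ((hd a).add (hd b))
      map_smul' := fun c a => uniq (c • a) _ ((hd a).smul c) }
  have hbd : ∀ a, ‖D₀ a‖ ≤ K * ‖(Submodule.span ℝ s).subtype a‖ := fun a =>
    le_of_tendsto ((hd a).tendsto x).norm (Eventually.of_forall fun t => by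
      simpa using norm_slope_sub_le hg x a 0 t)
  have hden : DenseRange (Submodule.span ℝ s).subtype := by
    simpa [DenseRange] using hs
  refine ⟨D₀.extendOfNorm (Submodule.span ℝ s).subtype, fun a => ?_⟩
  set D := D₀.extendOfNorm (Submodule.span ℝ s).subtype
  have hDb : ∀ b : Submodule.span ℝ s, D b = d b x := fun b =>
    LinearMap.extendOfNorm_eq hden ⟨_, hbd⟩ b
  have hDn : ∀ a, ‖D a‖ ≤ K * ‖a‖ := LinearMap.norm_extendOfNorm_apply_le hden K hbd
  rw [Metric.tendsto_nhds]
  intro ε hε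
  obtain ⟨b, hb, hab⟩ := Metric.dense_iff.1 hs a (ε / (4 * (K + 1))) (by positivity)
  rw [Metric.mem_ball, dist_eq_norm, lt_div_iff₀ (by positivity)] at hb
  have hbt := Metric.tendsto_nhds.1 ((hd ⟨b, hab⟩).tendsto x) (ε / 2) (by positivity)
  filter_upwards [hbt] with t ht
  have b1 := norm_slope_sub_le hg x a b t
  have b2 := hDn (b - a)
  rw [map_sub, hDb ⟨b, hab⟩] at b2
  rw [norm_sub_rev a b] at b1
  rw [dist_eq_norm] at ht ⊢
  have : ‖t⁻¹ • (g (x + t • a) - g x) - D a‖ ≤ _ :=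
    (congrArg norm (by abel)).le.trans (norm_add₃_le
      (a := t⁻¹ • (g (x + t • a) - g x) - t⁻¹ • (g (x + t • b) - g x))
      (b := t⁻¹ • (g (x + t • b) - g x) - d ⟨b, hab⟩ x) (c := d ⟨b, hab⟩ x - D a))
  nlinarith [norm_nonneg (b - a)]

lemma exists_small_dense [TopologicalSpace.SeparableSpace V] {η : ℝ} (hη : 0 < η) :
    ∃ v : ℕ → V, (Summable fun m => ‖v m‖) ∧ ∑' m, ‖v m‖ ≤ η ∧
      Dense (Submodule.span ℝ (Set.range v) : Set V) := by
  obtain ⟨u, hu⟩ := TopologicalSpace.exists_dense_seq V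
  let c : ℕ → ℝ := fun m => η / 2 / 2 ^ m / (‖u m‖ + 1)
  have hc : ∀ m, 0 < c m := fun m => by positivity
  have hle : ∀ m, ‖c m • u m‖ ≤ η / 2 / 2 ^ m := fun m => by
    rw [norm_smul, Real.norm_of_nonneg (hc m).le, div_mul_eq_mul_div, div_le_iff₀ (by positivity)]
    gcongr
    linarith
  have hs : Summable fun m => ‖c m • u m‖ :=
    Summable.of_nonneg_of_le (fun _ => norm_nonneg _) hle (summable_geometric_two' η)
  refine ⟨fun m => c m • u m, hs, ?_, ?_⟩
  · exact (hs.tsum_le_tsum hle (summable_geometric_two' η)).trans (tsum_geometric_two' η).le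
  · refine hu.mono ?_
    rintro _ ⟨m, rfl⟩
    have := Submodule.smul_mem _ (c m)⁻¹
      (Submodule.subset_span (R := ℝ) (Set.mem_range_self (f := fun m => c m • u m) m))
    simpa [inv_smul_smul₀ (hc m).ne'] using this

end Smoothing

/-! ### Matrix norms -/

section Amplification

/-- `amp` on scalar matrices as a continuous linear map, so that `cNorm a = ‖ampCLM a‖`. -/
def ampCLM (ι : Type*) [Fintype ι] :
    (ι → ι → ℂ) →L[ℂ] ((PiLp 2 fun _ : ι => ℂ) →L[ℂ] PiLp 2 fun _ : ι => ℂ) :=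
  LinearMap.toContinuousLinearMap
    { toFun := fun a => amp fun i j => a i j • (1 : ℂ →L[ℂ] ℂ)
      map_add' := fun a b => by
        ext v i
        simp [amp, add_mul, Finset.sum_add_distrib]
      map_smul' := fun c a => by
        ext v i
        simp [amp, mul_assoc, Finset.mul_sum] }

lemma cNorm_eq {ι : Type*} [Fintype ι] (a : ι → ι → ℂ) : cNorm a = ‖ampCLM ι a‖ := rfl

lemma cNorm_le {ι : Type*} [Fintype ι] {a : ι → ι → ℂ} {M : ℝ} (hM : 0 ≤ M)
    (h : ∀ i j, ‖a i j‖ ≤ M) : cNorm a ≤ ‖ampCLM ι‖ * M :=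
  (ampCLM ι).le_opNorm_of_le
    ((pi_norm_le_iff_of_nonneg hM).2 fun i => (pi_norm_le_iff_of_nonneg hM).2 fun j => h i j)

lemma norm_entry_le {ι : Type*} [Fintype ι] {H : Type*}
    [NormedAddCommGroup H] [InnerProductSpace ℂ H] (x : ι → ι → H →L[ℂ] H) (i j : ι) :
    ‖x i j‖ ≤ matNorm x := by
  classical
  refine ContinuousLinearMap.opNorm_le_bound _ (norm_nonneg (amp x)) fun u => ?_
  have h1 : (amp x (PiLp.single 2 j u)) i = x i j u := by
    simp [amp, apply_ite]
  rw [← h1]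
  refine (PiLp.norm_apply_le _ i).trans (((amp x).le_opNorm _).trans ?_)
  rw [PiLp.norm_single]
  rfl

/-- The linear map sending a family `e` of `k × k` matrices, indexed by two copies (tagged by a
Boolean) of the `n × n` positions, to the operator on `ℓ²(Fin n × Fin k)` given by the difference
of the two block matrices. -/
def diffCLM (n k : ℕ) : (Bool × Fin n × Fin n → Fin k → Fin k → ℂ) →L[ℝ]
    ((PiLp 2 fun _ : Fin n × Fin k => ℂ) →L[ℂ] PiLp 2 fun _ : Fin n × Fin k => ℂ) :=
  LinearMap.toContinuousLinearMap
    { toFun := fun e => ampCLM (Fin n × Fin k) fun a b =>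
        e (true, a.1, b.1) a.2 b.2 - e (false, a.1, b.1) a.2 b.2
      map_add' := fun e e' => by
        rw [← map_add]
        congr 1
        ext a b
        simp only [Pi.add_apply]
        ring
      map_smul' := fun c e => by
        rw [RingHom.id_apply, ← ContinuousLinearMap.map_smul_of_tower]
        congr 1
        ext a b
        simp only [Pi.smul_apply, smul_sub] }

end Amplification

set_option synthInstance.maxHeartbeats 1000000 in
set_option maxHeartbeats 1000000 in
/-- **Statement 17.** Gateaux ℝ-differentiable matrices of Lipschitz functions are dense. -/
theorem statement_17
    (X : Submodule ℂ (H →L[ℂ] H)) (hX : IsClosed (X : Set (H →L[ℂ] H)))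
    [TopologicalSpace.SeparableSpace X]
    (n k : ℕ) (hn : 0 < n) (hk : 0 < k)
    (f : Fin k → Fin k → (X → ℂ))
    (hf : ∀ p q, (∃ K, LipschitzWith K (f p q)) ∧ f p q 0 = 0)
    (ε : ℝ) (hε : 0 < ε) :
    ∃ g : Fin k → Fin k → (X → ℂ),
      (∀ p q, (∃ K, LipschitzWith K (g p q)) ∧ g p q 0 = 0) ∧
      -- (1) `G : x ↦ [g_pq x]` is Gateaux ℝ-differentiable at every point of `X`:
      (∀ x : X, ∃ D : X →L[ℝ] ((PiLp 2 fun _ : Fin k => ℂ) →L[ℂ] PiLp 2 fun _ : Fin k => ℂ),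
        ∀ a : X, Filter.Tendsto
          (fun t : ℝ => t⁻¹ • (matVal g (x + t • a) - matVal g x))
          (nhdsWithin (0 : ℝ) {t | t ≠ 0}) (nhds (D a))) ∧
      -- (2) the Lipschitz matrix norm does not increase:
      lipMatNorm X n k g ≤ lipMatNorm X n k f ∧
      -- (3) uniform approximation at the `n`-th matrix level:
      ∀ x : Fin n → Fin n → X,
        cNorm (fun a b : Fin n × Fin k =>
          f a.2 b.2 (x a.1 b.1) - g a.2 b.2 (x a.1 b.1)) ≤ ε := by
  classical
  set F : X → Fin k → Fin k → ℂ := fun x p q => f p q x with hF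
  choose Kf hKf using fun p q => (hf p q).1
  let K : NNReal := ∑ p, ∑ q, Kf p q
  have hK : ∀ p q, Kf p q ≤ K := fun p q =>
    (Finset.single_le_sum (f := fun q => Kf p q) (fun _ _ => zero_le) (Finset.mem_univ q)).trans
      (Finset.single_le_sum (f := fun p => ∑ q, Kf p q) (fun _ _ => zero_le) (Finset.mem_univ p))
  have hFK : LipschitzWith K F := LipschitzWith.of_dist_le_mul fun x y =>
    (dist_pi_le_iff (by positivity)).2 fun p => (dist_pi_le_iff (by positivity)).2 fun q =>
      ((hKf p q).weaken (hK p q)).dist_le_mul x y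
  set M : ℝ := ‖ampCLM (Fin n × Fin k)‖ with hM
  have hM0 : 0 ≤ M := norm_nonneg (ampCLM (Fin n × Fin k))
  -- Entrywise the error is at most `2 K η`, where one `K η` comes from subtracting `S 0`; passing
  -- to `cNorm` costs the factor `M`.
  set η : ℝ := ε / ((M + 1) * (2 * (K + 1))) with hη
  have hη0 : 0 < η := by positivity
  obtain ⟨v, hv, hvη, hdense⟩ := exists_small_dense (V := X) hη0
  set S : X → Fin k → Fin k → ℂ := smooth v F with hS
  have hSK : LipschitzWith K S := smooth_lipschitz hFK hv
  have happrox : ∀ x, ‖F x - S x‖ ≤ K * η := fun x =>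
    (norm_smooth_sub_le hFK hv x).trans (by gcongr)
  refine ⟨fun p q x => S x p q - S 0 p q, fun p q => ⟨⟨K, ?_⟩, sub_self _⟩, fun x => ?_, ?_,
    fun x => ?_⟩
  · refine LipschitzWith.of_dist_le_mul fun x y => ?_
    rw [dist_sub_right]
    exact ((dist_le_pi_dist _ _ q).trans (dist_le_pi_dist _ _ p)).trans (hSK.dist_le_mul x y)
  · obtain ⟨D, hD⟩ := gateaux_of_dense hSK hdense (by
      rintro _ ⟨j, rfl⟩
      obtain ⟨C, d, K', hd, hq⟩ := smooth_quadDeriv hFK hv j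
      exact ⟨d, hq.unifDeriv hd⟩) x
    refine ⟨((ampCLM (Fin k)).restrictScalars ℝ).comp D, fun a => ?_⟩
    refine (((ampCLM (Fin k)).continuous.tendsto _).comp (hD a)).congr fun t => ?_
    have e : ∀ y, matVal (fun p q x => S x p q - S 0 p q) y = ampCLM (Fin k) (S y - S 0) :=
      fun y => rfl
    rw [e, e, ← map_sub, sub_sub_sub_cancel_right, Function.comp_apply, ContinuousLinearMap.map_smul_of_tower]
  -- `sInf ∅ = 0`, so the admissible constants for `f` must also be shown to exist: `M * K` is one.
  · refine csInf_le_csInf ⟨0, fun L hL => hL.1⟩ ⟨M * K, by positivity, fun x y => ?_⟩ ?_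
    · refine (cNorm_le (M := K * matNorm fun i j => (x i j : H →L[ℂ] H) - (y i j : H →L[ℂ] H))
        (mul_nonneg K.2 (norm_nonneg _)) fun a b => ?_).trans (by rw [mul_assoc])
      refine (((hKf a.2 b.2).weaken (hK _ _)).norm_sub_le _ _).trans ?_
      gcongr
      exact norm_entry_le (fun i j => (x i j : H →L[ℂ] H) - (y i j : H →L[ℂ] H)) a.1 b.1
    · rintro L ⟨hL0, hL⟩
      refine ⟨hL0, fun x y => ?_⟩
      have key := smooth_convex (diffCLM n k) hFK hv
        (fun i => if i.1 then x i.2.1 i.2.2 else y i.2.1 i.2.2)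
        (C := L * matNorm fun i j => (x i j : H →L[ℂ] H) - (y i j : H →L[ℂ] H)) (fun w => ?_)
      · simp only [sub_sub_sub_cancel_right]
        exact key
      · have := hL (fun i j => x i j + w) (fun i j => y i j + w)
        simp only [Submodule.coe_add, add_sub_add_right_eq_sub] at this
        exact this
  · refine (cNorm_le (M := 2 * (K * η)) (by positivity) fun a b => ?_).trans ?_
    · have h1 := (norm_le_pi_norm _ b.2).trans
        ((norm_le_pi_norm _ a.2).trans (happrox (x a.1 b.1)))
      have h2 := (norm_le_pi_norm _ b.2).trans ((norm_le_pi_norm _ a.2).trans (happrox 0))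
      have e : f a.2 b.2 (x a.1 b.1) - (S (x a.1 b.1) a.2 b.2 - S 0 a.2 b.2) =
          (F (x a.1 b.1) - S (x a.1 b.1)) a.2 b.2 - (F 0 - S 0) a.2 b.2 := by
        simp only [Pi.sub_apply, hF, (hf _ _).2]
        ring
      rw [e]
      exact (norm_sub_le _ _).trans (by linarith)
    · have e : (M + 1) * (2 * (K + 1)) * η = ε := by
        rw [hη]
        field_simp
      have : M * (2 * (K * η)) ≤ (M + 1) * (2 * (K + 1)) * η := by
        have hK0 : (0 : ℝ) ≤ K := K.2
        nlinarith [mul_nonneg hM0 hη0.le, mul_nonneg hK0 hη0.le]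
      exact this.trans e.le

end OSpaper
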